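/- arXiv:1207.5839 — 5 statements merged into one kernel-verified Lean document; each statement's English description precedes it below -/
import Mathlib

section
/- For every r ≥ 1 and every realization of the delays, the matrix F(r, r+D̂) = P̂(r)ᵀ·P̂(r+1)ᵀ⋯P̂(r+D̂)ᵀ, where D̂ = (B+1)·D + B + 1, is row stochastic and every entry of each of its first n columns (the compute-node columns) is strictly positive; consequently its improper coefficient of ergodicity c(F) = 1 − max_s min_k F_{ks} is strictly less than 1. -/
open Matrix Filter BigOperators
open scoped Classical

noncomputable section

/-- A directed graph on `Fin n` with `m` directed edges, edge `e` going from
`src e` to `tgt e`. -/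
structure DGraph (n m : ℕ) where
  src : Fin m → Fin n
  tgt : Fin m → Fin n

/-- `y` is reachable from `x` by a directed path using at most `k` edges. -/
def ReachWithin {α : Type*} (adj : α → α → Prop) (k : ℕ) (x y : α) : Prop :=
  ∃ l : List α, l.length ≤ k ∧ List.Chain adj x l ∧
    (x :: l).getLast (List.cons_ne_nil x l) = y

/-- `D` is the diameter of the graph with adjacency relation `adj`: every node is
reachable from every node within `D` steps, and some ordered pair of nodes
requires `D` steps. -/
def IsDiameter {α : Type*} (adj : α → α → Prop) (D : ℕ) : Prop :=
  (∀ x y, ReachWithin adj D x y) ∧ (∃ x y, ∀ k, ReachWithin adj k x y → D ≤ k)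

/-- The adjacency relation of `G`. -/
def DGraph.adj {n m : ℕ} (G : DGraph n m) (a b : Fin n) : Prop :=
  ∃ e, G.src e = a ∧ G.tgt e = b

/-- Hypotheses of the Push-Sum random-delay model: no self-loops, distinct edges,
`P` column stochastic respecting `G` (hence with positive diagonal), and `G`
strongly connected. -/
structure DGraph.ValidCol {n m : ℕ} (G : DGraph n m) (P : Matrix (Fin n) (Fin n) ℝ) : Prop where
  noSelf : ∀ e, G.src e ≠ G.tgt e
  edgeInj : ∀ e e', G.src e = G.src e' → G.tgt e = G.tgt e' → e = e'
  nonneg : ∀ i j, 0 ≤ P i j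
  colSum : ∀ j, ∑ i, P i j = 1
  support : ∀ i j, 0 < P i j ↔ i = j ∨ ∃ e, G.src e = j ∧ G.tgt e = i
  connected : ∀ i j : Fin n, Relation.ReflTransGen G.adj i j

/-- Delay nodes: for every directed edge `e : Fin m`, every chain-length index
`ℓ : Fin B` (the parallel chain modelling a delay of `ℓ.1 + 1`), and every
position `k : Fin B` with `k ≤ ℓ` along that chain.  There are `m·B(B+1)/2`
of them in total. -/
def DelayNode (m B : ℕ) : Type :=
  {q : Fin m × Fin B × Fin B // q.2.2.1 ≤ q.2.1.1}

instance (m B : ℕ) : Fintype (DelayNode m B) := by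
  unfold DelayNode; infer_instance

instance (m B : ℕ) : DecidableEq (DelayNode m B) := by
  unfold DelayNode; infer_instance

namespace PushSumDelay

variable {n m B : ℕ}

/-- The edge a delay node belongs to. -/
def edgeOf (d : DelayNode m B) : Fin m := d.val.1
/-- The chain (of length `lenIdx d + 1`) a delay node belongs to. -/
def lenIdx (d : DelayNode m B) : ℕ := d.val.2.1.1
/-- The (0-indexed) position of a delay node along its chain. -/
def posIdx (d : DelayNode m B) : ℕ := d.val.2.2.1
/-- `d` is the terminal node of its chain. -/
def isTerminal (d : DelayNode m B) : Prop := d.val.2.2 = d.val.2.1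

/-- The fixed block-diagonal forward-shift matrix `C`. -/
def Cmat (m B : ℕ) : Matrix (DelayNode m B) (DelayNode m B) ℝ := fun d d' =>
  if d.val.1 = d'.val.1 ∧ d.val.2.1 = d'.val.2.1 ∧ posIdx d = posIdx d' + 1 then 1 else 0

/-- The fixed delivery matrix `J`: `J i d = 1` iff `d` is the terminal node of a
chain on an edge pointing into compute node `i`. -/
def Jmat (G : DGraph n m) (B : ℕ) : Matrix (Fin n) (DelayNode m B) ℝ := fun i d =>
  if G.tgt (edgeOf d) = i ∧ isTerminal d then 1 else 0

/-- `L(t)`: zero-delay deliveries. -/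
def Lmat (G : DGraph n m) (del : ℕ → Fin m → Fin (B + 1)) (t : ℕ) :
    Matrix (Fin n) (Fin n) ℝ := fun i j =>
  if ∃ e, G.src e = j ∧ G.tgt e = i ∧ (del t e).1 = 0 then 1 else 0

/-- `R(t)`: routing of messages into delay chains. -/
def Rmat (G : DGraph n m) (del : ℕ → Fin m → Fin (B + 1)) (t : ℕ) :
    Matrix (DelayNode m B) (Fin n) ℝ := fun d j =>
  if G.src (edgeOf d) = j ∧ posIdx d = 0 ∧ (del t (edgeOf d)).1 = lenIdx d + 1 then 1 else 0

/-- `P̄[R(t)]`: each `1` of `R(t)` (message from `j` routed into a chain towards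
`i = tgt e`) is replaced by the Push-Sum share `P i j`. -/
def PRmat (G : DGraph n m) (P : Matrix (Fin n) (Fin n) ℝ)
    (del : ℕ → Fin m → Fin (B + 1)) (t : ℕ) : Matrix (DelayNode m B) (Fin n) ℝ := fun d j =>
  Rmat G del t d j * P (G.tgt (edgeOf d)) j

/-- The Push-Sum delayed transition matrix
`P̂(t) = [[diag(P) + P∘L(t), J], [P̄[R(t)], C]]`. -/
def Phat (G : DGraph n m) (P : Matrix (Fin n) (Fin n) ℝ)
    (del : ℕ → Fin m → Fin (B + 1)) (t : ℕ) :
    Matrix (Fin n ⊕ DelayNode m B) (Fin n ⊕ DelayNode m B) ℝ :=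
  Matrix.fromBlocks
    (fun i j => (if i = j then P i j else 0) + P i j * Lmat G del t i j)
    (Jmat G B) (PRmat G P del t) (Cmat m B)

/-- Push-Sum sums: `ŝ(0) = (x(0), 0_b)`, `ŝ(t) = P̂(t)·ŝ(t−1)`. -/
def shat (G : DGraph n m) (P : Matrix (Fin n) (Fin n) ℝ)
    (del : ℕ → Fin m → Fin (B + 1)) (x0 : Fin n → ℝ) :
    ℕ → (Fin n ⊕ DelayNode m B) → ℝ
  | 0 => Sum.elim x0 (fun _ => 0)
  | t + 1 => Phat G P del (t + 1) *ᵥ shat G P del x0 t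

/-- Push-Sum weights: `ŵ(0) = (1_n, 0_b)`, `ŵ(t) = P̂(t)·ŵ(t−1)`. -/
def what (G : DGraph n m) (P : Matrix (Fin n) (Fin n) ℝ)
    (del : ℕ → Fin m → Fin (B + 1)) :
    ℕ → (Fin n ⊕ DelayNode m B) → ℝ
  | 0 => Sum.elim (fun _ => 1) (fun _ => 0)
  | t + 1 => Phat G P del (t + 1) *ᵥ what G P del t

/-- Forward products of transposes: `Fprod r k = P̂(r)ᵀ·P̂(r+1)ᵀ⋯P̂(r+k)ᵀ`,
i.e. `F(r, r+k)` in the paper's notation. -/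
def Fprod (G : DGraph n m) (P : Matrix (Fin n) (Fin n) ℝ)
    (del : ℕ → Fin m → Fin (B + 1)) (r : ℕ) :
    ℕ → Matrix (Fin n ⊕ DelayNode m B) (Fin n ⊕ DelayNode m B) ℝ
  | 0 => (Phat G P del r)ᵀ
  | k + 1 => Fprod G P del r k * (Phat G P del (r + k + 1))ᵀ

/-- The coefficient of ergodicity `τ₁(M) = (1/2)·max_{i,j} Σ_k |M_{ik} − M_{jk}|`. -/
def tau1 {V : Type*} [Fintype V] (M : Matrix V V ℝ) : ℝ :=
  sSup {z : ℝ | ∃ i j, z = (1 / 2) * ∑ k, |M i k - M j k|}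

/-- The improper coefficient of ergodicity `c(M) = 1 − max_s min_k M_{ks}`. -/
def cErg {V : Type*} [Fintype V] (M : Matrix V V ℝ) : ℝ :=
  1 - sSup {z : ℝ | ∃ s, z = sInf {y : ℝ | ∃ k, y = M k s}}

end PushSumDelay

end

namespace PushSumDelay

/-- `TimedWalk A r u k v`: there is a walk of length `k` from `u` to `v` whose `i`-th step
(counting from `0`) follows a positive entry of `A (r + i)`, read from column to row. -/
inductive TimedWalk {V : Type*} (A : ℕ → Matrix V V ℝ) (r : ℕ) (u : V) : ℕ → V → Prop
  | refl : TimedWalk A r u 0 u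
  | step {k : ℕ} {v w : V} (h : TimedWalk A r u k v) (hw : 0 < A (r + k) w v) :
      TimedWalk A r u (k + 1) w

section Ergodicity

variable {V : Type*} [Fintype V]

lemma cErg_lt_one_of_pos_column (M : Matrix V V ℝ) (s : V) (hs : ∀ k, 0 < M k s) :
    cErg M < 1 := by
  have hfin : {y : ℝ | ∃ k, y = M k s}.Finite :=
    (Set.finite_range fun k => M k s).subset (by rintro _ ⟨k, rfl⟩; exact ⟨k, rfl⟩)
  have hmem : sInf {y : ℝ | ∃ k, y = M k s} ∈ {y : ℝ | ∃ k, y = M k s} :=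
    Set.Nonempty.csInf_mem ⟨M s s, s, rfl⟩ hfin
  obtain ⟨k, hk⟩ := hmem
  have hbdd : BddAbove {z : ℝ | ∃ s, z = sInf {y : ℝ | ∃ k, y = M k s}} :=
    ((Set.finite_range fun s => sInf {y : ℝ | ∃ k, y = M k s}).subset
      (by rintro _ ⟨k, rfl⟩; exact ⟨k, rfl⟩)).bddAbove
  have hle := le_csSup hbdd ⟨s, rfl⟩
  have := hs k
  unfold cErg
  linarith

end Ergodicity

variable {n m B : ℕ} {G : DGraph n m} {P : Matrix (Fin n) (Fin n) ℝ}
  {del : ℕ → Fin m → Fin (B + 1)}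

lemma Phat_compute_compute (t : ℕ) (i j : Fin n) :
    Phat G P del t (Sum.inl i) (Sum.inl j) =
      (if i = j then P i j else 0) +
        P i j * (if ∃ e, G.src e = j ∧ G.tgt e = i ∧ (del t e).1 = 0 then 1 else 0) := rfl

lemma Phat_compute_delay (t : ℕ) (i : Fin n) (d : DelayNode m B) :
    Phat G P del t (Sum.inl i) (Sum.inr d) =
      if G.tgt (edgeOf d) = i ∧ isTerminal d then 1 else 0 := rfl

lemma Phat_delay_compute (t : ℕ) (d : DelayNode m B) (j : Fin n) :
    Phat G P del t (Sum.inr d) (Sum.inl j) = PRmat G P del t d j := rfl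

lemma PRmat_apply (t : ℕ) (d : DelayNode m B) (j : Fin n) :
    PRmat G P del t d j =
      (if G.src (edgeOf d) = j ∧ posIdx d = 0 ∧ (del t (edgeOf d)).1 = lenIdx d + 1
        then 1 else 0) * P (G.tgt (edgeOf d)) j := rfl

lemma Phat_delay_delay (t : ℕ) (d d' : DelayNode m B) :
    Phat G P del t (Sum.inr d) (Sum.inr d') = Cmat m B d d' := rfl

lemma Phat_nonneg (hV : G.ValidCol P) (t : ℕ) (u v : Fin n ⊕ DelayNode m B) :
    0 ≤ Phat G P del t u v := by
  have h0 := hV.nonneg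
  rcases u with i | d <;> rcases v with j | d'
  · rw [Phat_compute_compute]
    have := h0 i j
    split_ifs <;> simp [this]
  · rw [Phat_compute_delay]
    split_ifs <;> simp
  · rw [Phat_delay_compute, PRmat_apply]
    split_ifs <;> simp [h0]
  · rw [Phat_delay_delay, Cmat]
    split_ifs <;> simp

/-- A sum over the out-neighbours of `j` is a sum over the edges leaving `j`. -/
lemma sum_mul_edge_indicator (hV : G.ValidCol P) (j : Fin n) (q : Fin m → Prop)
    [DecidablePred q] :
    ∑ i, P i j * (if ∃ e, G.src e = j ∧ G.tgt e = i ∧ q e then 1 else 0) =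
      ∑ e, if G.src e = j ∧ q e then P (G.tgt e) j else 0 := by
  have hind : ∀ i, (if ∃ e, G.src e = j ∧ G.tgt e = i ∧ q e then (1 : ℝ) else 0) =
      ∑ e, if G.src e = j ∧ G.tgt e = i ∧ q e then 1 else 0 := by
    intro i
    split_ifs with h
    · obtain ⟨e, he⟩ := h
      rw [Finset.sum_eq_single e, if_pos he]
      · intro e' _ hne
        refine if_neg fun h' => hne (hV.edgeInj e' e ?_ ?_)
        · rw [h'.1, he.1]
        · rw [h'.2.1, he.2.1]
      · simp
    · exact (Finset.sum_eq_zero fun e _ => if_neg fun h' => h ⟨e, h'⟩).symm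
  simp_rw [hind, Finset.mul_sum]
  rw [Finset.sum_comm]
  refine Finset.sum_congr rfl fun e _ => ?_
  rw [Finset.sum_eq_single (G.tgt e)]
  · simp
  · intro i _ hne
    simp [hne.symm]
  · simp

/-- The first node of the chain into which edge `e` routes a message with delay `δ ≠ 0`. -/
def entryDelay (e : Fin m) (δ : Fin (B + 1)) (h : δ.1 ≠ 0) : DelayNode m B :=
  ⟨(e, ⟨δ.1 - 1, by omega⟩, ⟨0, by omega⟩), Nat.zero_le _⟩

lemma PRmat_entryDelay (t : ℕ) (e : Fin m) (h : (del t e).1 ≠ 0) :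
    PRmat G P del t (entryDelay e (del t e) h) (G.src e) = P (G.tgt e) (G.src e) := by
  have hR : (del t e).1 = lenIdx (entryDelay e (del t e) h) + 1 := by
    change (del t e).1 = (del t e).1 - 1 + 1
    omega
  rw [PRmat_apply, if_pos ⟨rfl, rfl, hR⟩, one_mul]
  rfl

/-- The mass routed from `j` into delay chains is that of its messages with nonzero delay. -/
lemma sum_PRmat (t : ℕ) (j : Fin n) :
    ∑ d, PRmat G P del t d j =
      ∑ e, if G.src e = j ∧ (del t e).1 ≠ 0 then P (G.tgt e) j else 0 := by
  rw [← Finset.sum_fiberwise (s := Finset.univ) (g := fun d : DelayNode m B => edgeOf d)]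
  refine Finset.sum_congr rfl fun e _ => ?_
  split_ifs with h
  · obtain ⟨rfl, hd⟩ := h
    rw [Finset.sum_eq_single (entryDelay e (del t e) hd)]
    · exact PRmat_entryDelay t e hd
    · intro d hde hne
      rw [PRmat_apply, if_neg, zero_mul]
      rintro ⟨-, hp, hl⟩
      refine hne (Subtype.ext ?_)
      obtain rfl : edgeOf d = e := (Finset.mem_filter.mp hde).2
      refine Prod.ext rfl (Prod.ext (Fin.ext ?_) (Fin.ext hp))
      change lenIdx d = (del t (edgeOf d)).1 - 1
      omega
    · intro h
      have hedge : edgeOf (entryDelay e (del t e) hd) = e := rfl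
      simp [hedge] at h
  · refine Finset.sum_eq_zero fun d hd => ?_
    obtain rfl : edgeOf d = e := (Finset.mem_filter.mp hd).2
    rw [PRmat_apply, if_neg, zero_mul]
    rintro ⟨hs, -, hl⟩
    exact h ⟨hs, by omega⟩

lemma share_eq_diag_add_edge (hV : G.ValidCol P) (i j : Fin n) :
    P i j = (if i = j then P i j else 0) +
      P i j * (if ∃ e, G.src e = j ∧ G.tgt e = i ∧ True then 1 else 0) := by
  by_cases hij : i = j
  · have : ¬ ∃ e, G.src e = j ∧ G.tgt e = i ∧ True := by
      rintro ⟨e, hs, ht, -⟩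
      exact hV.noSelf e (by rw [hs, ht, hij])
    rw [if_pos hij, if_neg this]
    ring
  · by_cases he : ∃ e, G.src e = j ∧ G.tgt e = i ∧ True
    · rw [if_neg hij, if_pos he]
      ring
    · rw [if_neg hij, if_neg he]
      have hp : ¬ 0 < P i j := by
        rw [hV.support]
        rintro (h | ⟨e, hs, ht⟩)
        · exact hij h
        · exact he ⟨e, hs, ht, trivial⟩
      have := hV.nonneg i j
      linarith

lemma sum_Phat_compute (hV : G.ValidCol P) (t : ℕ) (j : Fin n) :
    ∑ v, Phat G P del t v (Sum.inl j) = 1 := by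
  rw [Fintype.sum_sum_type]
  simp only [Phat_compute_compute, Phat_delay_compute]
  rw [sum_PRmat, Finset.sum_add_distrib, sum_mul_edge_indicator hV j fun e => (del t e).1 = 0,
    add_assoc, ← Finset.sum_add_distrib]
  have hsplit : ∀ e, ((if G.src e = j ∧ (del t e).1 = 0 then P (G.tgt e) j else 0) +
      if G.src e = j ∧ (del t e).1 ≠ 0 then P (G.tgt e) j else 0) =
      if G.src e = j ∧ True then P (G.tgt e) j else 0 := by
    intro e
    by_cases h₁ : G.src e = j <;> by_cases h₂ : (del t e).1 = 0 <;> simp [h₁, h₂]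
  rw [Finset.sum_congr rfl fun e _ => hsplit e, ← sum_mul_edge_indicator hV j fun _ => True,
    ← Finset.sum_add_distrib]
  exact (Finset.sum_congr rfl fun i _ => (share_eq_diag_add_edge hV i j).symm).trans (hV.colSum j)

/-- The successor of a non-terminal delay node along its chain. -/
def nextDelay (d : DelayNode m B) (h : posIdx d < lenIdx d) : DelayNode m B :=
  ⟨(d.val.1, d.val.2.1, ⟨posIdx d + 1, lt_of_le_of_lt h d.val.2.1.2⟩), h⟩

lemma isTerminal_iff (d : DelayNode m B) : isTerminal d ↔ posIdx d = lenIdx d :=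
  Fin.ext_iff

lemma posIdx_le_lenIdx (d : DelayNode m B) : posIdx d ≤ lenIdx d := d.2

lemma lenIdx_lt (d : DelayNode m B) : lenIdx d < B := d.val.2.1.2

lemma Cmat_eq_ite_nextDelay (d d' : DelayNode m B) (h : posIdx d < lenIdx d) :
    Cmat m B d' d = if d' = nextDelay d h then 1 else 0 := by
  refine if_congr ⟨?_, ?_⟩ rfl rfl
  · rintro ⟨h₁, h₂, h₃⟩
    exact Subtype.ext (Prod.ext h₁ (Prod.ext h₂ (Fin.ext h₃)))
  · rintro rfl
    exact ⟨rfl, rfl, rfl⟩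

lemma Cmat_eq_zero_of_isTerminal (d d' : DelayNode m B) (h : isTerminal d) :
    Cmat m B d' d = 0 := by
  refine if_neg ?_
  rintro ⟨-, h₂, h₃⟩
  have hle := posIdx_le_lenIdx d'
  have hlen : lenIdx d' = lenIdx d := congrArg Fin.val h₂
  have := (isTerminal_iff d).mp h
  omega

lemma sum_Phat_delay (t : ℕ) (d : DelayNode m B) :
    ∑ v, Phat G P del t v (Sum.inr d) = 1 := by
  rw [Fintype.sum_sum_type]
  simp only [Phat_compute_delay, Phat_delay_delay]
  by_cases h : isTerminal d
  · simp [Cmat_eq_zero_of_isTerminal _ _ h, h]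
  · have hlt : posIdx d < lenIdx d :=
      lt_of_le_of_ne (posIdx_le_lenIdx d) fun h' => h ((isTerminal_iff d).mpr h')
    simp [Cmat_eq_ite_nextDelay _ _ hlt, h]

lemma sum_Phat (hV : G.ValidCol P) (t : ℕ) (u : Fin n ⊕ DelayNode m B) :
    ∑ v, Phat G P del t v u = 1 := by
  rcases u with j | d
  · exact sum_Phat_compute hV t j
  · exact sum_Phat_delay t d

lemma Fprod_nonneg (hV : G.ValidCol P) (r k : ℕ) (u v : Fin n ⊕ DelayNode m B) :
    0 ≤ Fprod G P del r k u v := by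
  induction k generalizing v with
  | zero => exact Phat_nonneg hV r v u
  | succ k ih =>
    exact Finset.sum_nonneg fun w _ => mul_nonneg (ih w) (Phat_nonneg hV _ v w)

lemma sum_Fprod (hV : G.ValidCol P) (r k : ℕ) (u : Fin n ⊕ DelayNode m B) :
    ∑ v, Fprod G P del r k u v = 1 := by
  induction k with
  | zero => exact sum_Phat hV r u
  | succ k ih =>
    simp only [Fprod, Matrix.mul_apply, Matrix.transpose_apply]
    rw [Finset.sum_comm]
    simp_rw [← Finset.mul_sum, sum_Phat hV, mul_one]
    exact ih

lemma Fprod_pos_of_timedWalk (hV : G.ValidCol P) {r k : ℕ} {u v : Fin n ⊕ DelayNode m B}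
    (h : TimedWalk (Phat G P del) r u (k + 1) v) : 0 < Fprod G P del r k u v := by
  induction k generalizing v with
  | zero =>
    rcases h with _ | ⟨h, hw⟩
    cases h
    exact hw
  | succ k ih =>
    rcases h with _ | @⟨_, w, _, h, hw⟩
    have hterm := mul_pos (ih h) hw
    exact hterm.trans_le (Finset.single_le_sum
      (f := fun w => Fprod G P del r k u w * (Phat G P del (r + k + 1))ᵀ w v)
      (fun w _ => mul_nonneg (Fprod_nonneg hV r k u w) (Phat_nonneg hV _ v w))
      (Finset.mem_univ w))

section Walks

variable {r : ℕ} {u : Fin n ⊕ DelayNode m B}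

lemma TimedWalk.stay (hV : G.ValidCol P) {k l : ℕ} {i : Fin n}
    (h : TimedWalk (Phat G P del) r u k (Sum.inl i)) (hkl : k ≤ l) :
    TimedWalk (Phat G P del) r u l (Sum.inl i) := by
  induction l, hkl using Nat.le_induction with
  | base => exact h
  | succ l _ ih =>
    refine ih.step ?_
    have hp : 0 < P i i := (hV.support i i).mpr (Or.inl rfl)
    rw [Phat_compute_compute, if_pos rfl]
    split_ifs <;> simp [hp]

/-- A message sitting in a delay node reaches its destination at the end of the chain. -/
lemma TimedWalk.deliver {k : ℕ} {d : DelayNode m B}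
    (h : TimedWalk (Phat G P del) r u k (Sum.inr d)) :
    TimedWalk (Phat G P del) r u (k + (lenIdx d - posIdx d) + 1)
      (Sum.inl (G.tgt (edgeOf d))) := by
  obtain ⟨a, ha⟩ : ∃ a, lenIdx d - posIdx d = a := ⟨_, rfl⟩
  have hle := posIdx_le_lenIdx d
  induction a generalizing k d with
  | zero =>
    rw [ha]
    refine h.step ?_
    have ht : isTerminal d := (isTerminal_iff d).mpr (by omega)
    simp [Phat_compute_delay, ht]
  | succ a ih =>
    have hlt : posIdx d < lenIdx d := by omega
    have hnext : TimedWalk (Phat G P del) r u (k + 1) (Sum.inr (nextDelay d hlt)) := by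
      refine h.step ?_
      simp [Phat_delay_delay, Cmat_eq_ite_nextDelay _ _ hlt]
    have hsub : lenIdx (nextDelay d hlt) - posIdx (nextDelay d hlt) = a := by
      change lenIdx d - (posIdx d + 1) = a
      omega
    have := ih hnext hsub (posIdx_le_lenIdx _)
    rw [hsub] at this
    rw [ha, show k + (a + 1) + 1 = k + 1 + a + 1 by omega]
    exact this

lemma TimedWalk.traverse_edge (hV : G.ValidCol P) {k : ℕ} {e : Fin m}
    (h : TimedWalk (Phat G P del) r u k (Sum.inl (G.src e))) :
    TimedWalk (Phat G P del) r u (k + (B + 1)) (Sum.inl (G.tgt e)) := by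
  have hp : 0 < P (G.tgt e) (G.src e) := (hV.support _ _).mpr (Or.inr ⟨e, rfl, rfl⟩)
  by_cases h0 : (del (r + k) e).1 = 0
  · refine TimedWalk.stay (k := k + 1) hV (h.step ?_) (by omega)
    have hL : ∃ e', G.src e' = G.src e ∧ G.tgt e' = G.tgt e ∧ (del (r + k) e').1 = 0 :=
      ⟨e, rfl, rfl, h0⟩
    rw [Phat_compute_compute, if_pos hL, if_neg (hV.noSelf e).symm]
    simpa using hp
  · have hd : TimedWalk (Phat G P del) r u (k + 1)
        (Sum.inr (entryDelay e (del (r + k) e) h0)) := by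
      refine h.step ?_
      rw [Phat_delay_compute, PRmat_entryDelay]
      exact hp
    have := lenIdx_lt (entryDelay e (del (r + k) e) h0)
    exact hd.deliver.stay hV (by omega)

lemma TimedWalk.of_reachWithin (hV : G.ValidCol P) {D k : ℕ} {i j : Fin n}
    (hij : ReachWithin G.adj D i j) (h : TimedWalk (Phat G P del) r u k (Sum.inl i)) :
    TimedWalk (Phat G P del) r u (k + (B + 1) * D) (Sum.inl j) := by
  obtain ⟨l, hl, hchain, hlast⟩ := hij
  refine TimedWalk.stay (k := k + (B + 1) * l.length) hV ?_ (by gcongr)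
  clear hl
  induction l generalizing i k with
  | nil =>
    obtain rfl : i = j := hlast
    exact h
  | cons a l ih =>
    obtain ⟨⟨e, rfl, rfl⟩, hrest⟩ := List.isChain_cons_cons.mp hchain
    have := ih (h.traverse_edge hV) hrest (by simpa using hlast)
    rw [List.length_cons, show k + (B + 1) * (l.length + 1) =
      k + (B + 1) + (B + 1) * l.length by ring]
    exact this

lemma exists_timedWalk_compute (hV : G.ValidCol P) (r : ℕ) (u : Fin n ⊕ DelayNode m B) :
    ∃ i, TimedWalk (Phat G P del) r u B (Sum.inl i) := by
  rcases u with i | d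
  · exact ⟨i, TimedWalk.refl.stay hV (Nat.zero_le B)⟩
  · have := lenIdx_lt d
    exact ⟨_, TimedWalk.refl.deliver.stay hV (by omega)⟩

end Walks

end PushSumDelay

open PushSumDelay in
/-- **Positivity of the compute-node columns of `F(r, r+D̂)`.**  With
`D̂ = (B+1)·D + B + 1`, for every `r ≥ 1` and every realization of the delays, the
forward product `F(r, r+D̂) = P̂(r)ᵀ·P̂(r+1)ᵀ⋯P̂(r+D̂)ᵀ` is row stochastic, each of
its first `n` (compute-node) columns is entrywise strictly positive, and
consequently its improper coefficient of ergodicity `c(F) = 1 − max_s min_k F_{ks}`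
is strictly less than `1`. -/
theorem pushSum_random_delay_Fprod_positive_columns
    {n m B D : ℕ} (hn : 0 < n) (hB : 1 ≤ B)
    (G : DGraph n m) (P : Matrix (Fin n) (Fin n) ℝ) (hV : G.ValidCol P)
    (hD : IsDiameter G.adj D)
    (del : ℕ → Fin m → Fin (B + 1)) (r : ℕ) (hr : 1 ≤ r) :
    (∀ u v, 0 ≤ Fprod G P del r ((B + 1) * D + B + 1) u v) ∧
    (∀ u, ∑ v, Fprod G P del r ((B + 1) * D + B + 1) u v = 1) ∧
    (∀ u (j : Fin n), 0 < Fprod G P del r ((B + 1) * D + B + 1) u (Sum.inl j)) ∧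
    cErg (Fprod G P del r ((B + 1) * D + B + 1)) < 1 := by
  have hpos : ∀ u (j : Fin n),
      0 < Fprod G P del r ((B + 1) * D + B + 1) u (Sum.inl j) := by
    intro u j
    obtain ⟨i, hi⟩ := exists_timedWalk_compute (del := del) hV r u
    exact Fprod_pos_of_timedWalk hV ((hi.of_reachWithin hV (hD.1 i j)).stay hV (by omega))
  exact ⟨Fprod_nonneg hV r _, sum_Fprod hV r _, hpos,
    cErg_lt_one_of_pos_column _ (Sum.inl ⟨0, hn⟩) fun u => hpos u _⟩
end

section
/- Assume P is doubly stochastic. Let q_r = P_{j(r)i(r)} be the weight that node j(r) assigns to messages from node i(r), and set S = n + Σ_{r=1}^m b_r·q_r. Define π̂ ∈ ℝ^{n+b} by π̂_i = 1/S for every compute node i and π̂_{d_k^r} = q_r/S for every delay node d_k^r on the chain replacing edge r. Then π̂ is a probability vector (its entries are nonnegative and sum to 1) and it is a stationary distribution of the delayed protocol: π̂ᵀ·P̂ = π̂ᵀ. -/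
open Matrix Filter BigOperators
open scoped Classical

noncomputable section

/-- Graph hypotheses: no self-loops, distinct edges, `P` row stochastic respecting
`G` (hence with positive diagonal), `G` strongly connected. -/
structure DGraph.Valid {n m : ℕ} (G : DGraph n m) (P : Matrix (Fin n) (Fin n) ℝ) : Prop where
  noSelf : ∀ e, G.src e ≠ G.tgt e
  edgeInj : ∀ e e', G.src e = G.src e' → G.tgt e = G.tgt e' → e = e'
  nonneg : ∀ i j, 0 ≤ P i j
  rowSum : ∀ i, ∑ j, P i j = 1
  support : ∀ i j, 0 < P i j ↔ i = j ∨ ∃ e, G.src e = j ∧ G.tgt e = i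
  connected : ∀ i j : Fin n,
    Relation.ReflTransGen (fun a b => ∃ e, G.src e = a ∧ G.tgt e = b) i j

/-- The delay nodes of the fixed-delay augmentation: for edge `r` with delay
`bvec r`, the chain positions `0, …, bvec r − 1` (position `k` is the node
`d_{k+1}^r` of the paper). -/
def FDelayNode (m : ℕ) (bvec : Fin m → ℕ) : Type := Σ r : Fin m, Fin (bvec r)

instance (m : ℕ) (bvec : Fin m → ℕ) : Fintype (FDelayNode m bvec) := by
  unfold FDelayNode; infer_instance

instance (m : ℕ) (bvec : Fin m → ℕ) : DecidableEq (FDelayNode m bvec) := by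
  unfold FDelayNode; infer_instance

/-- The node set of the augmented graph `Ĝ`: `n` compute nodes plus
`b = ∑ r, bvec r` delay nodes. -/
abbrev FNode (n m : ℕ) (bvec : Fin m → ℕ) : Type := Fin n ⊕ FDelayNode m bvec

/-- The fixed-delay augmented protocol `P̂` on `Ĝ`:
`P̂_{ij} = P_{ij}` for compute nodes with `i = j` or `(j,i)` an edge of zero delay;
`P̂_{d_1^r, i(r)} = 1`; `P̂_{d_k^r, d_{k-1}^r} = 1`; `P̂_{j(r), d_{b_r}^r} = P_{j(r) i(r)}`
for every edge `r` with `bvec r ≥ 1`; all other entries `0`. -/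
def PhatFixed {n m : ℕ} (G : DGraph n m) (P : Matrix (Fin n) (Fin n) ℝ)
    (bvec : Fin m → ℕ) : Matrix (FNode n m bvec) (FNode n m bvec) ℝ := fun u v =>
  match u, v with
  | Sum.inl i, Sum.inl j =>
      if i = j ∨ ∃ r, G.src r = j ∧ G.tgt r = i ∧ bvec r = 0 then P i j else 0
  | Sum.inl i, Sum.inr d =>
      if G.tgt d.1 = i ∧ (d.2 : ℕ) + 1 = bvec d.1 then P i (G.src d.1) else 0
  | Sum.inr d, Sum.inl j =>
      if G.src d.1 = j ∧ (d.2 : ℕ) = 0 then 1 else 0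
  | Sum.inr d, Sum.inr d' =>
      if d.1 = d'.1 ∧ (d.2 : ℕ) = (d'.2 : ℕ) + 1 then 1 else 0

end

/-- A sum over delay nodes is an iterated sum over edges and chain positions. -/
theorem FDelayNode.sum_eq {m : ℕ} {bvec : Fin m → ℕ} (f : FDelayNode m bvec → ℝ) :
    ∑ d, f d = ∑ r, ∑ k : Fin (bvec r), f ⟨r, k⟩ :=
  Fintype.sum_sigma (α := fun r => Fin (bvec r)) f

theorem Fin.sum_ite_val_eq {b : ℕ} (c : ℕ) (x : ℝ) :
    ∑ k : Fin b, (if (k : ℕ) = c then x else 0) = if c < b then x else 0 := by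
  rw [Fin.sum_univ_eq_sum_range (fun k => if k = c then x else 0) b]
  simp

/-- The entry `P i j` splits into its direct part in the delayed protocol and the part
carried by an edge with positive delay. -/
theorem DGraph.Valid.entry_eq {n m : ℕ} {G : DGraph n m} {P : Matrix (Fin n) (Fin n) ℝ}
    (hV : G.Valid P) (bvec : Fin m → ℕ) (i j : Fin n) :
    P i j = PhatFixed G P bvec (Sum.inl i) (Sum.inl j) +
      ∑ r, if G.tgt r = i then (if G.src r = j ∧ 0 < bvec r then
        P (G.tgt r) (G.src r) else 0) else 0 := by
  simp only [PhatFixed]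
  by_cases hedge : ∃ r, G.src r = j ∧ G.tgt r = i
  · obtain ⟨r, rfl, rfl⟩ := hedge
    rw [Finset.sum_eq_single r]
    · have hdirect : (G.tgt r = G.src r ∨
          ∃ e, G.src e = G.src r ∧ G.tgt e = G.tgt r ∧ bvec e = 0) ↔ bvec r = 0 := by
        refine ⟨?_, fun h => Or.inr ⟨r, rfl, rfl, h⟩⟩
        rintro (h | ⟨e, hs, ht, h⟩)
        · exact absurd h.symm (hV.noSelf r)
        · rwa [← hV.edgeInj e r hs ht]
      by_cases h : bvec r = 0
      · simp [hdirect, h]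
      · simp [hdirect, h, Nat.pos_of_ne_zero h]
    · intro e _ hne
      split_ifs with ht hs
      · exact absurd (hV.edgeInj e r hs.1 ht) hne
      · rfl
      · rfl
    · simp
  · have hsum : ∀ r, (if G.tgt r = i then (if G.src r = j ∧ 0 < bvec r then
        P (G.tgt r) (G.src r) else 0) else 0) = 0 := by
      intro r
      split_ifs with ht hs
      · exact absurd ⟨r, hs.1, ht⟩ hedge
      · rfl
      · rfl
    rw [Finset.sum_eq_zero fun r _ => hsum r, add_zero]
    split_ifs with h
    · rfl
    · have hpos : ¬ 0 < P i j := fun hp =>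
        ((hV.support i j).1 hp).elim (fun hij => h (Or.inl hij)) hedge
      exact le_antisymm (not_lt.1 hpos) (hV.nonneg i j)

/-- **Stationary distribution of the fixed-delay protocol (doubly stochastic `P`).**
With `q_r = P_{j(r) i(r)}` and `S = n + ∑ r, b_r·q_r`, the vector assigning `1/S`
to every compute node and `q_r/S` to every delay node on the chain of edge `r` is
a probability vector and satisfies `π̂ᵀ·P̂ = π̂ᵀ`. -/
theorem fixed_delay_stationary_distribution
    {n m : ℕ} (hn : 0 < n)
    (G : DGraph n m) (P : Matrix (Fin n) (Fin n) ℝ) (hV : G.Valid P)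
    (hcol : ∀ j, ∑ i, P i j = 1)
    (B : ℕ) (bvec : Fin m → ℕ) (hb : ∀ r, bvec r ≤ B)
    (S : ℝ) (hS : S = (n : ℝ) + ∑ r, (bvec r : ℝ) * P (G.tgt r) (G.src r))
    (pihat : FNode n m bvec → ℝ)
    (hpihat : pihat = Sum.elim (fun _ : Fin n => 1 / S)
      (fun d : FDelayNode m bvec => P (G.tgt d.1) (G.src d.1) / S)) :
    (∀ u, 0 ≤ pihat u) ∧ (∑ u, pihat u = 1) ∧
      pihat ᵥ* PhatFixed G P bvec = pihat := by
  have hSpos : 0 < S := by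
    rw [hS]
    have hn' : (0 : ℝ) < n := Nat.cast_pos.2 hn
    have hdelay : 0 ≤ ∑ r, (bvec r : ℝ) * P (G.tgt r) (G.src r) :=
      Finset.sum_nonneg fun r _ => mul_nonneg (Nat.cast_nonneg _) (hV.nonneg _ _)
    linarith
  subst hpihat
  refine ⟨?_, ?_, ?_⟩
  · rintro (i | d)
    · exact div_nonneg zero_le_one hSpos.le
    · exact div_nonneg (hV.nonneg _ _) hSpos.le
  · rw [Fintype.sum_sum_type]
    simp only [Sum.elim_inl, Sum.elim_inr, FDelayNode.sum_eq, Finset.sum_const,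
      Finset.card_univ, Fintype.card_fin, nsmul_eq_mul, mul_div_assoc', mul_one]
    rw [← Finset.sum_div, ← add_div, ← hS, div_self hSpos.ne']
  · funext v
    rw [Matrix.vecMul, dotProduct, Fintype.sum_sum_type]
    simp only [Sum.elim_inl, Sum.elim_inr, FDelayNode.sum_eq]
    rcases v with j | ⟨r, k⟩
    · have hcolumn := hcol j
      rw [Finset.sum_congr rfl fun i _ => hV.entry_eq bvec i j,
        Finset.sum_add_distrib, Finset.sum_comm] at hcolumn
      simp only [Finset.sum_ite_eq, Finset.mem_univ, if_true] at hcolumn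
      have hchain : ∀ r, ∑ k : Fin (bvec r), P (G.tgt r) (G.src r) / S *
          PhatFixed G P bvec (Sum.inr ⟨r, k⟩) (Sum.inl j) =
          1 / S * if G.src r = j ∧ 0 < bvec r then P (G.tgt r) (G.src r) else 0 := by
        intro r
        simp only [PhatFixed]
        by_cases hs : G.src r = j
        · simp only [hs, true_and, mul_ite, mul_one, mul_zero, Fin.sum_ite_val_eq]
          split_ifs <;> ring
        · simp [hs]
      rw [Finset.sum_congr rfl fun r _ => hchain r, ← Finset.mul_sum, ← Finset.mul_sum,
        ← mul_add, hcolumn, mul_one, Sum.elim_inl]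
    · have hchain : ∑ r', ∑ k' : Fin (bvec r'), P (G.tgt r') (G.src r') / S *
          PhatFixed G P bvec (Sum.inr ⟨r', k'⟩) (Sum.inr ⟨r, k⟩) =
          if (k : ℕ) + 1 < bvec r then P (G.tgt r) (G.src r) / S else 0 := by
        simp only [PhatFixed]
        rw [Finset.sum_eq_single r]
        · simp only [true_and, mul_ite, mul_one, mul_zero, Fin.sum_ite_val_eq]
        · intro r' _ hne
          simp [hne]
        · simp
      change _ = P (G.tgt r) (G.src r) / S
      rw [hchain]
      simp only [PhatFixed]
      rcases (Nat.succ_le_of_lt k.isLt).eq_or_lt with h | h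
      · have h' : (k : ℕ) + 1 = bvec r := h
        simp [h', div_eq_inv_mul]
      · have h' : (k : ℕ) + 1 < bvec r := h
        simp [h', h'.ne]
end

section
/- Assume G is symmetric (every undirected edge gives two directed edges), connected, and without self-loops, and let P be the max-weight matrix P = I − (diag(deg) − A)/(d_max + 1), where A is the adjacency matrix, deg the vector of degrees, and d_max = max_i deg_i; P is doubly stochastic. Then for any assignment of fixed delays b_r ≤ B to the directed edges, with b = Σ_r b_r total delay nodes, the vector π̂ defined by π̂_i = (d_max + 1)/(b + n(d_max + 1)) for every compute node i and π̂_k = 1/(b + n(d_max + 1)) for every delay node k is a probability vector and a stationary distribution of P̂: π̂ᵀ·P̂ = π̂ᵀ. In particular the stationary distribution takes only these two values, independently of how the delays are distributed over the links. -/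
open Matrix Filter BigOperators
open scoped Classical

/-- The out-degree of node `i` (for a symmetric graph without self-loops this is
its degree in the undirected sense). -/
def DGraph.deg {n m : ℕ} (G : DGraph n m) (i : Fin n) : ℕ :=
  (Finset.univ.filter (fun e => G.src e = i)).card

/-- Maximum degree of `G`. -/
def DGraph.maxDeg {n m : ℕ} (G : DGraph n m) : ℕ :=
  Finset.univ.sup G.deg

theorem sum_fin_ite_val_eq (N a : ℕ) (c : ℝ) :
    ∑ k : Fin N, (if (k : ℕ) = a then c else 0) = if a < N then c else 0 := by
  split_ifs with h
  · rw [Fintype.sum_eq_single ⟨a, h⟩]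
    · simp
    · intro k hk
      exact if_neg fun h' => hk (Fin.ext h')
  · refine Finset.sum_eq_zero fun k _ => if_neg fun h' : (k : ℕ) = a => h (h' ▸ k.isLt)

namespace DGraph

variable {n m : ℕ} (G : DGraph n m)

/-- In a graph without parallel edges, an indicator of an edge's existence is a sum over edges. -/
theorem ite_exists_edge_eq_sum
    (hedgeInj : ∀ e e', G.src e = G.src e' → G.tgt e = G.tgt e' → e = e')
    (q : Fin m → Prop) (i j : Fin n) (c : ℝ) :
    (if ∃ r, G.src r = j ∧ G.tgt r = i ∧ q r then c else 0) =
      ∑ r, if G.src r = j ∧ G.tgt r = i ∧ q r then c else 0 := by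
  split_ifs with h
  · obtain ⟨r, hj, hi, hq⟩ := h
    rw [Fintype.sum_eq_single r]
    · rw [if_pos ⟨hj, hi, hq⟩]
    · rintro r' hr'
      exact if_neg fun h' => hr' (hedgeInj _ _ (h'.1.trans hj.symm) (h'.2.1.trans hi.symm))
  · exact (Finset.sum_eq_zero fun r _ => if_neg fun h' => h ⟨r, h'⟩).symm

/-- Summing the edge indicator over all targets leaves the edges leaving `j`. -/
theorem sum_ite_exists_edge
    (hedgeInj : ∀ e e', G.src e = G.src e' → G.tgt e = G.tgt e' → e = e')
    (q : Fin m → Prop) (j : Fin n) (c : ℝ) :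
    ∑ i, (if ∃ r, G.src r = j ∧ G.tgt r = i ∧ q r then c else 0) =
      ∑ r, if G.src r = j ∧ q r then c else 0 := by
  simp_rw [G.ite_exists_edge_eq_sum hedgeInj]
  rw [Finset.sum_comm]
  refine Finset.sum_congr rfl fun r _ => ?_
  rw [Fintype.sum_eq_single (G.tgt r)]
  · simp
  · intro i hi
    exact if_neg fun h => hi h.2.1.symm

theorem sum_ite_src (j : Fin n) (c : ℝ) :
    ∑ r, (if G.src r = j then c else 0) = G.deg j * c := by
  rw [← Finset.sum_filter, Finset.sum_const, nsmul_eq_mul]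
  rfl

theorem deg_le_maxDeg (i : Fin n) : G.deg i ≤ G.maxDeg :=
  Finset.le_sup (Finset.mem_univ i)

/-- Column sums of the max-weight matrix restricted to the diagonal and the edges satisfying
`q`. -/
theorem sum_maxWeight_restrict
    (hnoSelf : ∀ e, G.src e ≠ G.tgt e)
    (hedgeInj : ∀ e e', G.src e = G.src e' → G.tgt e = G.tgt e' → e = e')
    (P : Matrix (Fin n) (Fin n) ℝ)
    (hP : ∀ i j, P i j =
      if i = j then 1 - (G.deg i : ℝ) / ((G.maxDeg : ℝ) + 1)
      else if ∃ e, G.src e = j ∧ G.tgt e = i then 1 / ((G.maxDeg : ℝ) + 1) else 0)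
    (q : Fin m → Prop) (j : Fin n) :
    ∑ i, (if i = j ∨ ∃ r, G.src r = j ∧ G.tgt r = i ∧ q r then P i j else 0) =
      1 - (G.deg j : ℝ) / ((G.maxDeg : ℝ) + 1) +
        ∑ r, if G.src r = j ∧ q r then 1 / ((G.maxDeg : ℝ) + 1) else 0 := by
  have key : ∀ i, (if i = j ∨ ∃ r, G.src r = j ∧ G.tgt r = i ∧ q r then P i j else 0) =
      (if i = j then 1 - (G.deg j : ℝ) / ((G.maxDeg : ℝ) + 1) else 0) +
        (if ∃ r, G.src r = j ∧ G.tgt r = i ∧ q r then 1 / ((G.maxDeg : ℝ) + 1) else 0) := by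
    intro i
    rw [hP]
    by_cases hij : i = j
    · subst hij
      have h : ¬ ∃ r, G.src r = i ∧ G.tgt r = i ∧ q r :=
        fun ⟨r, hs, ht, _⟩ => hnoSelf r (hs.trans ht.symm)
      simp [h]
    · by_cases h : ∃ r, G.src r = j ∧ G.tgt r = i ∧ q r
      · have h' : ∃ r, G.src r = j ∧ G.tgt r = i := h.imp fun r hr => ⟨hr.1, hr.2.1⟩
        rw [if_pos (Or.inr h), if_neg hij, if_pos h', if_neg hij, if_pos h, zero_add]
      · rw [if_neg (not_or.2 ⟨hij, h⟩), if_neg hij, if_neg h, zero_add]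
  rw [Finset.sum_congr rfl fun i _ => key i, Finset.sum_add_distrib,
    G.sum_ite_exists_edge hedgeInj]
  simp

end DGraph

/-- **Stationary distribution of the fixed-delay protocol for the max-weight
matrix.**  If `G` is symmetric, connected and without self-loops and
`P = I − (diag(deg) − A)/(d_max + 1)` is the max-weight matrix, then `P` is doubly
stochastic, and for any assignment of fixed delays `b_r ≤ B` with `b = ∑ r, b_r`
delay nodes, the vector taking the value `(d_max+1)/(b + n(d_max+1))` on every
compute node and `1/(b + n(d_max+1))` on every delay node is a probability vector
and a stationary distribution of `P̂` — only two values, regardless of how the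
delays are distributed over the links. -/
theorem fixed_delay_stationary_distribution_max_weight
    {n m : ℕ} (hn : 0 < n)
    (G : DGraph n m)
    (hnoSelf : ∀ e, G.src e ≠ G.tgt e)
    (hedgeInj : ∀ e e', G.src e = G.src e' → G.tgt e = G.tgt e' → e = e')
    (hsym : ∀ e, ∃ e', G.src e' = G.tgt e ∧ G.tgt e' = G.src e)
    (hconn : ∀ i j : Fin n,
      Relation.ReflTransGen (fun a b => ∃ e, G.src e = a ∧ G.tgt e = b) i j)
    (P : Matrix (Fin n) (Fin n) ℝ)
    (hP : ∀ i j, P i j =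
      if i = j then 1 - (G.deg i : ℝ) / ((G.maxDeg : ℝ) + 1)
      else if ∃ e, G.src e = j ∧ G.tgt e = i then 1 / ((G.maxDeg : ℝ) + 1) else 0)
    (B : ℕ) (bvec : Fin m → ℕ) (hb : ∀ r, bvec r ≤ B)
    (b : ℕ) (hbdef : b = ∑ r, bvec r)
    (pihat : FNode n m bvec → ℝ)
    (hpihat : pihat = Sum.elim
      (fun _ : Fin n =>
        ((G.maxDeg : ℝ) + 1) / ((b : ℝ) + n * ((G.maxDeg : ℝ) + 1)))
      (fun _ : FDelayNode m bvec =>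
        1 / ((b : ℝ) + n * ((G.maxDeg : ℝ) + 1)))) :
    (∀ i j, 0 ≤ P i j) ∧ (∀ i, ∑ j, P i j = 1) ∧ (∀ j, ∑ i, P i j = 1) ∧
    (∀ u, 0 ≤ pihat u) ∧ (∑ u, pihat u = 1) ∧
      pihat ᵥ* PhatFixed G P bvec = pihat := by
  have hD : (0 : ℝ) < (G.maxDeg : ℝ) + 1 := by positivity
  have hS : (0 : ℝ) < (b : ℝ) + n * ((G.maxDeg : ℝ) + 1) := by positivity
  have hnonneg : ∀ i j, 0 ≤ P i j := by
    intro i j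
    rw [hP]
    split_ifs
    · rw [sub_nonneg, div_le_one hD]
      have : (G.deg i : ℝ) ≤ G.maxDeg := by exact_mod_cast G.deg_le_maxDeg i
      linarith
    · positivity
    · exact le_rfl
  have hsymP : ∀ i j, P i j = P j i := by
    intro i j
    by_cases hij : i = j
    · rw [hij]
    · have hiff : (∃ e, G.src e = j ∧ G.tgt e = i) ↔ ∃ e, G.src e = i ∧ G.tgt e = j := by
        constructor <;> rintro ⟨e, h₁, h₂⟩ <;> obtain ⟨e', h₃, h₄⟩ := hsym e <;>
          exact ⟨e', h₃.trans h₂, h₄.trans h₁⟩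
      rw [hP, hP, if_neg hij, if_neg (Ne.symm hij)]
      simp only [hiff]
  have hcol : ∀ j, ∑ i, P i j = 1 := by
    intro j
    have h := G.sum_maxWeight_restrict hnoSelf hedgeInj P hP (fun _ => True) j
    simp only [and_true, G.sum_ite_src] at h
    rw [mul_one_div, sub_add_cancel] at h
    rw [← h]
    refine Finset.sum_congr rfl fun i _ => ?_
    split_ifs with h'
    · rfl
    · rw [not_or] at h'
      rw [hP, if_neg h'.1, if_neg h'.2]
  refine ⟨hnonneg, fun i => ?_, hcol, ?_, ?_, ?_⟩
  · simp_rw [hsymP i]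
    exact hcol i
  · rintro (i | d) <;> simp only [hpihat, Sum.elim_inl, Sum.elim_inr] <;> positivity
  · rw [hpihat, Fintype.sum_sum_type]
    simp only [Sum.elim_inl, Sum.elim_inr, FDelayNode.sum_eq (bvec := bvec), Finset.sum_const,
      Finset.card_univ, Fintype.card_fin, nsmul_eq_mul, ← Finset.sum_mul, ← Nat.cast_sum, ← hbdef]
    field_simp
    ring
  · funext v
    rw [hpihat, Matrix.vecMul, dotProduct, Fintype.sum_sum_type]
    rcases v with j | ⟨r, k⟩
    · simp only [Sum.elim_inl, Sum.elim_inr, PhatFixed, ← Finset.mul_sum]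
      have hdirect :
          ∑ i, (if i = j ∨ ∃ r, G.src r = j ∧ G.tgt r = i ∧ bvec r = 0 then P i j else 0) =
            1 - (G.deg j : ℝ) / ((G.maxDeg : ℝ) + 1) +
              ∑ r, if G.src r = j ∧ bvec r = 0 then 1 / ((G.maxDeg : ℝ) + 1) else 0 := by
        convert G.sum_maxWeight_restrict hnoSelf hedgeInj P hP (fun r => bvec r = 0) j
      rw [hdirect, FDelayNode.sum_eq]
      have hdelay : ∀ r, ∑ k : Fin (bvec r),
          (if G.src r = j ∧ (k : ℕ) = 0 then (1 : ℝ) else 0) =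
            (if G.src r = j then 1 else 0) - (if G.src r = j ∧ bvec r = 0 then 1 else 0) := by
        intro r
        by_cases hj : G.src r = j
        · simp only [hj, true_and, if_true, sum_fin_ite_val_eq]
          by_cases h0 : bvec r = 0 <;> simp [h0, Nat.pos_iff_ne_zero]
        · simp [hj]
      have hscale : ∑ r, (if G.src r = j ∧ bvec r = 0 then 1 / ((G.maxDeg : ℝ) + 1) else 0) =
          (∑ r, if G.src r = j ∧ bvec r = 0 then (1 : ℝ) else 0) / ((G.maxDeg : ℝ) + 1) := by
        rw [Finset.sum_div]
        refine Finset.sum_congr rfl fun r _ => ?_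
        split_ifs <;> simp
      rw [Finset.sum_congr rfl fun r _ => hdelay r, Finset.sum_sub_distrib, G.sum_ite_src, hscale]
      field_simp
      ring
    · simp only [Sum.elim_inl, Sum.elim_inr, PhatFixed, ← Finset.mul_sum]
      have hPr : P (G.tgt r) (G.src r) = 1 / ((G.maxDeg : ℝ) + 1) := by
        rw [hP, if_neg (hnoSelf r).symm, if_pos ⟨r, rfl, rfl⟩]
      have hlast : ∑ i, (if G.tgt r = i ∧ (k : ℕ) + 1 = bvec r then P i (G.src r) else 0) =
          if (k : ℕ) + 1 = bvec r then 1 / ((G.maxDeg : ℝ) + 1) else 0 := by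
        rw [Fintype.sum_eq_single (G.tgt r)]
        · simp only [true_and, hPr]
        · intro i hi
          exact if_neg fun h => hi h.1.symm
      have hchain : ∑ r', ∑ k' : Fin (bvec r'),
          (if r' = r ∧ (k' : ℕ) = (k : ℕ) + 1 then (1 : ℝ) else 0) =
            if (k : ℕ) + 1 < bvec r then 1 else 0 := by
        rw [Fintype.sum_eq_single r]
        · simp only [true_and, sum_fin_ite_val_eq]
        · intro r' hr'
          exact Finset.sum_eq_zero fun k' _ => if_neg fun h => hr' h.1
      rw [hlast, FDelayNode.sum_eq, hchain]
      change _ = 1 / ((b : ℝ) + n * ((G.maxDeg : ℝ) + 1))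
      rcases (Nat.succ_le_of_lt k.isLt).eq_or_lt with h | h
      · have h' : (k : ℕ) + 1 = bvec r := h
        rw [if_pos h', if_neg h'.not_lt]
        field_simp
        ring
      · have h' : (k : ℕ) + 1 < bvec r := h
        rw [if_neg h'.ne, if_pos h']
        ring
end

section
/- Let n ≥ 1, b ≥ 0, N = n + b, and let Q be an N×N column-stochastic matrix whose powers Q^t converge entrywise, as t → ∞, to a limit Q^∞ all of whose columns are equal. For x ∈ ℝⁿ set ŝ(0) = (x, 0_b) ∈ ℝ^N and ŵ(0) = (1_n, 0_b) ∈ ℝ^N. Then for every index i with (Q^∞)_{i1} > 0, lim_{t→∞} (Q^t·ŝ(0))_i / (Q^t·ŵ(0))_i = (1/n)·Σ_{j=1}^n x_j; i.e., Push-Sum run with the column-stochastic delayed protocol Q, with delay nodes initialized to zero sum and zero weight, converges at every such node to the true average of the compute nodes' initial values. -/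
open Matrix Filter BigOperators

/-- If the `i`-th rows of `A t` converge entrywise to a row with constant value `c`, then
`(A t *ᵥ v) i` converges to `c` times the sum of the entries of `v`. -/
theorem tendsto_mulVec_of_tendsto_const_row {ι κ m R : Type*} [Fintype m] [Semiring R]
    [TopologicalSpace R] [IsTopologicalSemiring R] {l : Filter κ} {A : κ → Matrix ι m R}
    {i : ι} {c : R} (hA : ∀ j, Tendsto (fun t => A t i j) l (nhds c)) (v : m → R) :
    Tendsto (fun t => (A t *ᵥ v) i) l (nhds (c * ∑ j, v j)) := by
  rw [Finset.mul_sum]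
  exact tendsto_finsetSum _ fun j _ => (hA j).mul_const (v j)

/-- **Push-Sum with fixed delays converges to the true average.**
`Q` is the column-stochastic fixed-delay augmentation, acting on `n` compute nodes
(`Sum.inl`) and `b` delay nodes (`Sum.inr`).  Push-Sum is initialized with
`ŝ(0) = (x, 0_b)` and `ŵ(0) = (1_n, 0_b)`.  If the powers `Q ^ t` converge entrywise
to a limit `Qinf` all of whose columns are equal, then at every index `i` with
`(Qinf)_{i,1} > 0` (column of the first compute node) the ratio
`(Q^t ŝ(0))_i / (Q^t ŵ(0))_i` converges to `(1/n) ∑ j, x j`. -/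
theorem pushSum_fixed_delays_converges_to_average
    (n b : ℕ) (hn : 0 < n)
    (Q : Matrix (Fin n ⊕ Fin b) (Fin n ⊕ Fin b) ℝ)
    (hnonneg : ∀ i j, 0 ≤ Q i j)
    (hcolsum : ∀ j, ∑ i, Q i j = 1)
    (Qinf : Matrix (Fin n ⊕ Fin b) (Fin n ⊕ Fin b) ℝ)
    (hconv : ∀ i j,
      Tendsto (fun t : ℕ => (Q ^ t) i j) atTop (nhds (Qinf i j)))
    (hcols : ∀ i j j', Qinf i j = Qinf i j')
    (x : Fin n → ℝ) (i : Fin n ⊕ Fin b)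
    (hi : 0 < Qinf i (Sum.inl ⟨0, hn⟩)) :
    Tendsto
      (fun t : ℕ =>
        ((Q ^ t) *ᵥ (Sum.elim x (fun _ => (0 : ℝ)))) i /
          ((Q ^ t) *ᵥ (Sum.elim (fun _ => (1 : ℝ)) (fun _ => (0 : ℝ)))) i)
      atTop (nhds ((∑ j, x j) / n)) := by
  have hrow : ∀ j, Tendsto (fun t : ℕ => (Q ^ t) i j) atTop
      (nhds (Qinf i (Sum.inl ⟨0, hn⟩))) := fun j => hcols i j _ ▸ hconv i j
  have hn' : (n : ℝ) ≠ 0 := by exact_mod_cast hn.ne'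
  have hsum := tendsto_mulVec_of_tendsto_const_row hrow (Sum.elim x fun _ => 0)
  have hweight := tendsto_mulVec_of_tendsto_const_row hrow
    (Sum.elim (fun _ => 1) fun _ => 0)
  simp only [Fintype.sum_sum_type, Sum.elim_inl, Sum.elim_inr, Finset.sum_const_zero, add_zero,
    Finset.sum_const, Finset.card_univ, Fintype.card_fin, nsmul_eq_mul, mul_one] at hsum hweight
  rw [← mul_div_mul_left _ _ hi.ne']
  exact hsum.div hweight (mul_ne_zero hi.ne' hn')
end

section
/- Let P be an n×n column-stochastic matrix whose powers P^t converge entrywise, as t → ∞, to a limit P^∞ all of whose columns are equal. Then for every initial vector x(0) ∈ ℝⁿ and every index i with (P^∞)_{i1} > 0, lim_{t→∞} (P^t·x(0))_i / (P^t·1_n)_i = (1/n)·Σ_{j=1}^n x_j(0); i.e., Push-Sum with protocol P converges at every such node to the average of the initial values, without requiring P to be doubly stochastic or its stationary distribution to be known. -/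
open Matrix Filter BigOperators

/-- **Push-Sum consensus converges to the average.**
Let `P` be an `n × n` column-stochastic matrix whose powers `P ^ t` converge entrywise
to a limit `Pinf` all of whose columns are equal.  Then for every initial vector `x0`
and every index `i` whose limiting first-column entry is positive, the Push-Sum ratio
`(P ^ t ⬝ x0)_i / (P ^ t ⬝ 1)_i` converges to the average `(∑ j, x0 j) / n`. -/
theorem pushSum_converges_to_average
    (n : ℕ) (hn : 0 < n) (P : Matrix (Fin n) (Fin n) ℝ)
    (hnonneg : ∀ i j, 0 ≤ P i j)
    (hcol : ∀ j : Fin n, ∑ i, P i j = 1)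
    (Pinf : Matrix (Fin n) (Fin n) ℝ)
    (hconv : ∀ i j : Fin n,
      Tendsto (fun t : ℕ => (P ^ t) i j) atTop (nhds (Pinf i j)))
    (hcols : ∀ i j j' : Fin n, Pinf i j = Pinf i j')
    (x0 : Fin n → ℝ) (i : Fin n) (hi : 0 < Pinf i ⟨0, hn⟩) :
    Tendsto
      (fun t : ℕ => ((P ^ t) *ᵥ x0) i / ((P ^ t) *ᵥ (fun _ => (1 : ℝ))) i)
      atTop (nhds ((∑ j, x0 j) / n)) := by
  have hlim (v : Fin n → ℝ) : Tendsto (fun t : ℕ => ((P ^ t) *ᵥ v) i) atTop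
      (nhds (Pinf i ⟨0, hn⟩ * ∑ j, v j)) := by
    rw [Finset.mul_sum]
    refine tendsto_finsetSum _ fun j _ => ?_
    rw [hcols i ⟨0, hn⟩ j]
    exact (hconv i j).mul_const (v j)
  have hn' : (n : ℝ) ≠ 0 := Nat.cast_ne_zero.mpr hn.ne'
  have hone : ∑ _j : Fin n, (1 : ℝ) = n := by simp
  have hratio := (hlim x0).div (hlim fun _ => 1) (by rw [hone]; exact mul_ne_zero hi.ne' hn')
  rwa [hone, mul_div_mul_left _ _ hi.ne'] at hratio
end
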